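/- Optimal local tester (Theorem 3.1 / Theorem thm:key, theorem-4222259): Let P = (Pyes, Pno) be a property of bipartite pure states in ℂ^d ⊗ ℂ^d that is unitarily invariant on H_B. Let 0 ≤ s < c ≤ 1 and suppose T is a (c,s)-tester for P with sample complexity N. Then there exists a matrix M indexed by (Fin N → Fin d) with 0 ⊑ M ⊑ 1 such that the local tester on H_A determined by M, namely T̂ x y = M (fun i => (x i).1) (fun i => (y i).1) * (if (fun i => (x i).2) = (fun i => (y i).2) then 1 else 0), is also a (c,s)-tester for P with sample complexity N. -/

import Mathlib

open scoped ComplexConjugate ComplexOrder Kronecker Matrix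
open MeasureTheory

namespace PaperStmt

/-- The rank-one matrix `ψψ†` associated with a vector `ψ`. -/
noncomputable def outer {ι : Type*} (ψ : ι → ℂ) : Matrix ι ι ℂ :=
  Matrix.of fun x y => ψ x * conj (ψ y)

/-- The `N`-fold tensor power of a square matrix `ρ`. -/
noncomputable def tpow {ι : Type*} (ρ : Matrix ι ι ℂ) (N : ℕ) : Matrix (Fin N → ι) (Fin N → ι) ℂ :=
  Matrix.of fun x y => ∏ i, ρ (x i) (y i)

/-- `ψ` is a unit vector (for the ℓ² norm). -/
def IsUnitVec {ι : Type*} [Fintype ι] (ψ : ι → ℂ) : Prop :=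
  ∑ x, Complex.normSq (ψ x) = 1

/-- `0 ⊑ T ⊑ 1` in the Loewner order. -/
def IsTester {κ : Type*} [Fintype κ] [DecidableEq κ] (T : Matrix κ κ ℂ) : Prop :=
  T.PosSemidef ∧ ((1 : Matrix κ κ ℂ) - T).PosSemidef

/-- `ρ` is a density matrix: positive semidefinite with unit trace. -/
def IsDensity {ι : Type*} [Fintype ι] (ρ : Matrix ι ι ℂ) : Prop :=
  ρ.PosSemidef ∧ ρ.trace = 1

/-- The acceptance probability `tr (T · ρ^{⊗N})` of a tester `T` on `N` samples of `ρ`. -/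
noncomputable def acc {ι : Type*} [Fintype ι] {N : ℕ}
    (T : Matrix (Fin N → ι) (Fin N → ι) ℂ) (ρ : Matrix ι ι ℂ) : ℝ :=
  ((T * tpow ρ N).trace).re

/-- The trace distance `½ ∑ᵢ |λᵢ(ρ - σ)|` between (Hermitian) matrices. -/
noncomputable def traceDist {κ : Type*} [Fintype κ] [DecidableEq κ]
    (ρ σ : Matrix κ κ ℂ) : ℝ :=
  if h : (ρ - σ).IsHermitian then (1 / 2) * ∑ i, |h.eigenvalues i| else 0

/-- The local tester on `H_A` determined by a matrix `M` acting on Alice's registers. -/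
noncomputable def localA {d N : ℕ} (M : Matrix (Fin N → Fin d) (Fin N → Fin d) ℂ) :
    Matrix (Fin N → Fin d × Fin d) (Fin N → Fin d × Fin d) ℂ :=
  Matrix.of fun x y =>
    M (fun i => (x i).1) (fun i => (y i).1) *
      (if (fun i => (x i).2) = (fun i => (y i).2) then 1 else 0)

/-- The vector `(I ⊗ U) ψ` : the unitary `U` applied to the `B` part of `ψ`. -/
noncomputable def applyB {d : ℕ} (U : Matrix (Fin d) (Fin d) ℂ) (ψ : Fin d × Fin d → ℂ) :
    Fin d × Fin d → ℂ :=
  fun p => ∑ k, U p.2 k * ψ (p.1, k)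

/-- The partial trace over the second (`B`) tensor factor. -/
noncomputable def ptraceB {d : ℕ} (M : Matrix (Fin d × Fin d) (Fin d × Fin d) ℂ) :
    Matrix (Fin d) (Fin d) ℂ :=
  Matrix.of fun a b => ∑ j, M (a, j) (b, j)



theorem tpow_mul' {d N : ℕ} (X Y : Matrix (Fin d) (Fin d) ℂ) :
    tpow (X * Y) N = tpow X N * tpow Y N := by
  ext a b
  simp only [tpow, Matrix.of_apply, Matrix.mul_apply, ← Finset.prod_mul_distrib]
  rw [Finset.prod_univ_sum, Fintype.piFinset_univ]

theorem tpow_one' {d N : ℕ} :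
    tpow (1 : Matrix (Fin d) (Fin d) ℂ) N = 1 := by
  ext a b
  simp only [tpow, Matrix.of_apply, Matrix.one_apply, Finset.prod_ite_zero, funext_iff]
  simp

theorem tpow_conjTranspose' {d N : ℕ} (X : Matrix (Fin d) (Fin d) ℂ) :
    tpow Xᴴ N = (tpow X N)ᴴ := by
  ext a b
  simp [tpow, Matrix.conjTranspose_apply]

/-- `X^{⊗N} ⊗ 1`. -/
noncomputable def lft {d : ℕ} (N : ℕ) (X : Matrix (Fin d) (Fin d) ℂ) :
    Matrix ((Fin N → Fin d) × (Fin N → Fin d)) ((Fin N → Fin d) × (Fin N → Fin d)) ℂ :=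
  tpow X N ⊗ₖ 1

/-- The vectorisation of `X^{⊗N}`. -/
noncomputable def wv {d : ℕ} (N : ℕ) (X : Matrix (Fin d) (Fin d) ℂ) :
    (Fin N → Fin d) × (Fin N → Fin d) → ℂ :=
  fun p => tpow X N p.1 p.2

theorem lft_mul {d N : ℕ} (X Y : Matrix (Fin d) (Fin d) ℂ) :
    lft N (X * Y) = lft N X * lft N Y := by
  simp [lft, tpow_mul', ← Matrix.mul_kronecker_mul]

theorem lft_one {d N : ℕ} : lft N (1 : Matrix (Fin d) (Fin d) ℂ) = 1 := by
  simp [lft, tpow_one']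

theorem lft_conjTranspose {d N : ℕ} (X : Matrix (Fin d) (Fin d) ℂ) :
    lft N Xᴴ = (lft N X)ᴴ := by
  simp [lft, tpow_conjTranspose', Matrix.conjTranspose_kronecker]

theorem lft_wv {d N : ℕ} (X Y : Matrix (Fin d) (Fin d) ℂ) :
    lft N X *ᵥ wv N Y = wv N (X * Y) := by
  ext p
  simp [lft, wv, tpow_mul', Matrix.mulVec, dotProduct, Fintype.sum_prod_type,
    Matrix.mul_apply, Matrix.one_apply]

theorem outer_mulVec {κ : Type*} [Fintype κ] (K : Matrix κ κ ℂ) (v : κ → ℂ) :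
    outer (K *ᵥ v) = K * outer v * Kᴴ := by
  have h : ∀ u : κ → ℂ, outer u = Matrix.vecMulVec u (star u) := fun u => by
    ext; simp [outer, Matrix.vecMulVec_apply]
  rw [h, h, Matrix.mul_vecMulVec, Matrix.vecMulVec_mul, Matrix.star_mulVec]

instance compactU (d : ℕ) : CompactSpace (Matrix.unitaryGroup (Fin d) ℂ) := by
  refine isCompact_iff_compactSpace (s := ((Matrix.unitaryGroup (Fin d) ℂ : Submonoid _) : Set (Matrix (Fin d) (Fin d) ℂ))).1 ?_
  have hc : IsCompact (Set.pi Set.univ fun _ : Fin d => Set.pi Set.univ fun _ : Fin d =>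
      Metric.closedBall (0 : ℂ) 1) :=
    isCompact_univ_pi fun _ => isCompact_univ_pi fun _ => isCompact_closedBall _ _
  refine IsCompact.of_isClosed_subset (X := Matrix (Fin d) (Fin d) ℂ) hc ?_ ?_
  · have : ((Matrix.unitaryGroup (Fin d) ℂ : Submonoid _) : Set (Matrix (Fin d) (Fin d) ℂ)) =
        {U | U * star U = 1} := by
      ext U; exact Matrix.mem_unitaryGroup_iff
    rw [this]
    exact isClosed_eq (by fun_prop) continuous_const
  · intro U hU i _ j _
    simpa using entry_norm_bound_of_unitary hU i j

theorem haar_exists (d N : ℕ) :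
    ∃ G : Matrix ((Fin N → Fin d) × (Fin N → Fin d)) ((Fin N → Fin d) × (Fin N → Fin d)) ℂ,
      G.PosSemidef ∧ (∀ a a', ∑ b, G (a, b) (a', b) = (1 : Matrix _ _ ℂ) a a') ∧
      (∀ V ∈ Matrix.unitaryGroup (Fin d) ℂ, G * lft N V = lft N V * G) ∧
      (∀ (K : Matrix _ _ ℂ) (c : ℝ),
        (∀ W ∈ Matrix.unitaryGroup (Fin d) ℂ, c ≤ ((K * outer (wv N W)).trace).re) →
          c ≤ ((K * G).trace).re) := by
  let _ : MeasurableSpace (Matrix.unitaryGroup (Fin d) ℂ) := borel _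
  have : BorelSpace (Matrix.unitaryGroup (Fin d) ℂ) := ⟨rfl⟩
  let μ : Measure (Matrix.unitaryGroup (Fin d) ℂ) := Measure.haarMeasure ⊤
  have : IsProbabilityMeasure μ := ⟨by
    simpa [μ] using Measure.haarMeasure_self
      (K₀ := (⊤ : TopologicalSpace.PositiveCompacts (Matrix.unitaryGroup (Fin d) ℂ)))⟩
  let G : Matrix ((Fin N → Fin d) × (Fin N → Fin d)) ((Fin N → Fin d) × (Fin N → Fin d)) ℂ :=
    Matrix.of fun p q => ∫ W, outer (wv N (W : Matrix (Fin d) (Fin d) ℂ)) p q ∂μ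
  have hcont : ∀ p q, Continuous fun W : Matrix.unitaryGroup (Fin d) ℂ =>
      outer (wv N (W : Matrix (Fin d) (Fin d) ℂ)) p q := by
    intro p q
    have hco : ∀ i j, Continuous fun W : Matrix.unitaryGroup (Fin d) ℂ =>
        (W : Matrix (Fin d) (Fin d) ℂ) i j := fun i j =>
      (continuous_apply j).comp ((continuous_apply i).comp continuous_subtype_val)
    simp only [outer, wv, tpow, Matrix.of_apply]
    refine Continuous.mul ?_ (Complex.continuous_conj.comp ?_)
    all_goals exact continuous_finsetProd _ fun i _ => hco _ _
  have hint : ∀ p q, Integrable (fun W : Matrix.unitaryGroup (Fin d) ℂ =>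
      outer (wv N (W : Matrix (Fin d) (Fin d) ℂ)) p q) μ := fun p q =>
    (hcont p q).integrable_of_hasCompactSupport (HasCompactSupport.of_compactSpace _)
  -- linear functionals pass through the integral
  have hlin : ∀ f : _ → _ → ℂ, ∑ p, ∑ q, f p q * G p q =
      ∫ W, ∑ p, ∑ q, f p q * outer (wv N (W : Matrix (Fin d) (Fin d) ℂ)) p q ∂μ := by
    intro f
    rw [integral_finsetSum _ fun p _ => integrable_finsetSum _ fun q _ => (hint p q).const_mul _]
    refine Finset.sum_congr rfl fun p _ => ?_
    rw [integral_finsetSum _ fun q _ => (hint p q).const_mul _]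
    refine Finset.sum_congr rfl fun q _ => ?_
    rw [integral_const_mul]; rfl
  have htr : ∀ K : Matrix _ _ ℂ, (K * G).trace =
      ∫ W, (K * outer (wv N (W : Matrix (Fin d) (Fin d) ℂ))).trace ∂μ := by
    intro K
    simp only [Matrix.trace, Matrix.diag, Matrix.mul_apply]
    rw [Finset.sum_comm, hlin fun p q => K q p]
    congr 1; ext W; rw [Finset.sum_comm]
  have htri : ∀ K : Matrix _ _ ℂ, Integrable (fun W : Matrix.unitaryGroup (Fin d) ℂ =>
      (K * outer (wv N (W : Matrix (Fin d) (Fin d) ℂ))).trace) μ := by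
    intro K
    simp only [Matrix.trace, Matrix.diag, Matrix.mul_apply]
    exact integrable_finsetSum _ fun p _ => integrable_finsetSum _ fun q _ =>
      (hint q p).const_mul _
  have hle : ∀ (K : Matrix _ _ ℂ) (c : ℝ),
        (∀ W ∈ Matrix.unitaryGroup (Fin d) ℂ, c ≤ ((K * outer (wv N W)).trace).re) →
          c ≤ ((K * G).trace).re := by
    intro K c h
    rw [htr]
    have h1 := integral_re (htri K)
    simp only [RCLike.re_to_complex] at h1
    rw [← h1]
    have : c = ∫ W : Matrix.unitaryGroup (Fin d) ℂ, c ∂μ := by simp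
    rw [this]
    exact integral_mono (integrable_const _) (htri K).re fun W => h W W.2
  have hherm : G.IsHermitian := by
    ext p q
    simp only [G, Matrix.conjTranspose_apply, Matrix.of_apply]
    rw [RCLike.star_def, ← integral_conj]
    congr 1; ext W; simp [outer, mul_comm]
  have hquad : ∀ (A : Matrix ((Fin N → Fin d) × (Fin N → Fin d)) ((Fin N → Fin d) × (Fin N → Fin d)) ℂ) x,
      star x ⬝ᵥ (A *ᵥ x) = (outer x * A).trace := by
    intro A x
    simp only [Matrix.trace, Matrix.diag, Matrix.mul_apply, outer, dotProduct, Matrix.mulVec,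
      Matrix.of_apply, Pi.star_apply, Finset.mul_sum]
    rw [Finset.sum_comm]
    refine Finset.sum_congr rfl fun p _ => Finset.sum_congr rfl fun q _ => ?_
    rw [RCLike.star_def]; ring
  refine ⟨G, ?_, ?_, ?_, hle⟩
  · refine Matrix.PosSemidef.of_dotProduct_mulVec_nonneg hherm fun x => ?_
    have him : (star x ⬝ᵥ (G *ᵥ x)).im = 0 := by
      simpa using hherm.im_star_dotProduct_mulVec_self x
    rw [Complex.nonneg_iff]
    refine ⟨?_, him.symm⟩
    rw [hquad]
    refine hle _ _ fun W _ => ?_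
    have : (outer x * outer (wv N W)).trace = ((Complex.normSq (∑ p, conj (x p) * wv N W p) : ℝ) : ℂ) := by
      rw [Complex.normSq_eq_conj_mul_self]
      simp only [Matrix.trace, Matrix.diag, Matrix.mul_apply, outer, Matrix.of_apply, map_sum,
        map_mul, Complex.conj_conj, Finset.sum_mul_sum]
      refine Finset.sum_congr rfl fun p _ => Finset.sum_congr rfl fun q _ => ?_
      ring
    rw [this, Complex.ofReal_re]
    exact Complex.normSq_nonneg _
  · intro a a'
    simp only [G, Matrix.of_apply]
    rw [← integral_finsetSum _ fun b _ => hint _ _]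
    have : ∀ W : Matrix.unitaryGroup (Fin d) ℂ,
        ∑ b, outer (wv N (W : Matrix (Fin d) (Fin d) ℂ)) (a, b) (a', b) = (1 : Matrix _ _ ℂ) a a' := by
      intro W
      have h := tpow_mul' (N := N) (W : Matrix (Fin d) (Fin d) ℂ) (W : Matrix (Fin d) (Fin d) ℂ)ᴴ
      have hW := Matrix.mem_unitaryGroup_iff.1 W.2
      rw [Matrix.star_eq_conjTranspose] at hW
      rw [hW, tpow_one', tpow_conjTranspose'] at h
      rw [h, Matrix.mul_apply]
      rfl
    simp only [this]
    simp
  · intro V hV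
    have key : lft N V * G * (lft N V)ᴴ = G := by
      ext p q
      have h1 : ∀ A : Matrix _ _ ℂ, (lft N V * A * (lft N V)ᴴ) p q =
          ∑ r, ∑ r', (lft N V p r * star (lft N V q r')) * A r r' := by
        intro A
        simp only [Matrix.mul_apply, Matrix.conjTranspose_apply, Finset.sum_mul]
        rw [Finset.sum_comm]
        refine Finset.sum_congr rfl fun r _ => Finset.sum_congr rfl fun r' _ => ?_
        ring
      rw [h1, hlin]
      simp only [← h1, ← outer_mulVec, lft_wv]
      exact integral_mul_left_eq_self
        (fun W : Matrix.unitaryGroup (Fin d) ℂ => outer (wv N (W : Matrix (Fin d) (Fin d) ℂ)) p q)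
        (⟨V, hV⟩ : Matrix.unitaryGroup (Fin d) ℂ)
    have hV' := Matrix.mem_unitaryGroup_iff'.1 hV
    rw [Matrix.star_eq_conjTranspose] at hV'
    conv_lhs => rw [← key]
    rw [Matrix.mul_assoc, ← lft_conjTranspose, ← lft_mul, hV', lft_one, Matrix.mul_one]


theorem comm_diag {d N : ℕ}
    (G : Matrix ((Fin N → Fin d) × (Fin N → Fin d)) ((Fin N → Fin d) × (Fin N → Fin d)) ℂ)
    (hG : ∀ V ∈ Matrix.unitaryGroup (Fin d) ℂ, G * lft N V = lft N V * G) (D : Fin d → ℂ) :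
    G * lft N (Matrix.diagonal D) = lft N (Matrix.diagonal D) * G := by
  have hl : ∀ D : Fin d → ℂ, lft N (Matrix.diagonal D) =
      Matrix.diagonal fun p : (Fin N → Fin d) × (Fin N → Fin d) => ∏ i, D (p.1 i) := by
    intro D
    have : tpow (Matrix.diagonal D) N = Matrix.diagonal fun a : Fin N → Fin d => ∏ i, D (a i) := by
      ext a b
      simp only [tpow, Matrix.of_apply, Matrix.diagonal_apply, Finset.prod_ite_zero, funext_iff]
      simp
    rw [lft, this, ← Matrix.diagonal_one, Matrix.diagonal_kronecker_diagonal]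
    simp
  have hcirc : (Metric.sphere (0 : ℂ) 1).Infinite := by
    refine Set.infinite_of_injective_forall_mem (f := fun n : ℕ => Complex.exp ((n : ℝ) * Complex.I))
      ?_ ?_
    · intro m n h
      obtain ⟨k, hk⟩ := Complex.exp_eq_exp_iff_exists_int.1 h
      have hk' : (m : ℝ) = n + k * (2 * Real.pi) := by
        have := congrArg Complex.im hk
        simpa using this
      by_contra hmn
      have hk0 : (k : ℝ) ≠ 0 := by
        intro h0
        rw [h0] at hk'
        apply hmn
        have : (m : ℝ) = n := by linarith
        exact_mod_cast this
      refine irrational_pi ⟨((m : ℚ) - n) / (k * 2), ?_⟩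
      push_cast
      field_simp
      linarith
    · intro n
      rw [mem_sphere_zero_iff_norm]
      exact Complex.norm_exp_ofReal_mul_I _
  ext p q
  have hpoly : (MvPolynomial.C (G p q) * ∏ i, MvPolynomial.X (q.1 i) : MvPolynomial (Fin d) ℂ) =
      (∏ i, MvPolynomial.X (p.1 i)) * MvPolynomial.C (G p q) := by
    refine MvPolynomial.funext_set (fun _ => Metric.sphere (0 : ℂ) 1) (fun _ => hcirc) ?_
    intro x hx
    have hV : Matrix.diagonal x ∈ Matrix.unitaryGroup (Fin d) ℂ := by
      rw [Matrix.mem_unitaryGroup_iff, Matrix.star_eq_conjTranspose,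
        Matrix.diagonal_conjTranspose, Matrix.diagonal_mul_diagonal, ← Matrix.diagonal_one]
      congr 1; ext i
      have h1 : ‖x i‖ = 1 := by simpa using hx i (Set.mem_univ i)
      simp [Complex.mul_conj, Complex.normSq_eq_norm_sq, h1]
    have h := congrFun (congrFun (hG _ hV) p) q
    rw [hl, Matrix.mul_diagonal, Matrix.diagonal_mul] at h
    simpa [MvPolynomial.eval_prod] using h
  have := congrArg (MvPolynomial.eval D) hpoly
  rw [hl, Matrix.mul_diagonal, Matrix.diagonal_mul]
  simpa [MvPolynomial.eval_prod] using this

theorem comm_herm {d N : ℕ}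
    (G : Matrix ((Fin N → Fin d) × (Fin N → Fin d)) ((Fin N → Fin d) × (Fin N → Fin d)) ℂ)
    (hG : ∀ V ∈ Matrix.unitaryGroup (Fin d) ℂ, G * lft N V = lft N V * G)
    (H : Matrix (Fin d) (Fin d) ℂ) (hH : H.IsHermitian) :
    G * lft N H = lft N H * G := by
  have h := hH.spectral_theorem
  rw [Unitary.conjStarAlgAut_apply] at h
  rw [h, lft_mul, lft_mul]
  have h1 : Commute G _ := hG _ hH.eigenvectorUnitary.2
  have h2 : Commute G _ := comm_diag G hG (RCLike.ofReal ∘ hH.eigenvalues)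
  have h3 : Commute G _ := hG _ (star hH.eigenvectorUnitary).2
  exact (h1.mul_right h2).mul_right h3

theorem comm_all {d N : ℕ}
    (G : Matrix ((Fin N → Fin d) × (Fin N → Fin d)) ((Fin N → Fin d) × (Fin N → Fin d)) ℂ)
    (hG : ∀ V ∈ Matrix.unitaryGroup (Fin d) ℂ, G * lft N V = lft N V * G)
    (X : Matrix (Fin d) (Fin d) ℂ) :
    G * lft N X = lft N X * G := by
  obtain ⟨A, B, hA, hB, rfl⟩ : ∃ A B : Matrix (Fin d) (Fin d) ℂ, A.IsHermitian ∧ B.IsHermitian ∧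
      A + Complex.I • B = X := by
    refine ⟨(realPart X : Matrix (Fin d) (Fin d) ℂ), (imaginaryPart X : Matrix (Fin d) (Fin d) ℂ),
      (realPart X).2, (imaginaryPart X).2, realPart_add_I_smul_imaginaryPart X⟩
  ext p q
  let L : (Fin N → Fin d) × (Fin N → Fin d) → (Fin N → Fin d) × (Fin N → Fin d) → Polynomial ℂ :=
    fun p q => (∏ i, (Polynomial.C (A (p.1 i) (q.1 i)) +
      Polynomial.X * Polynomial.C (B (p.1 i) (q.1 i)))) *
      Polynomial.C ((1 : Matrix (Fin N → Fin d) (Fin N → Fin d) ℂ) p.2 q.2)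
  have hL : ∀ t p q, (L p q).eval t = lft N (A + t • B) p q := by
    intro t p q
    simp [L, lft, tpow, Polynomial.eval_prod, mul_comm t]
  have hpoly : ∑ r, Polynomial.C (G p r) * L r q = ∑ r, L p r * Polynomial.C (G r q) := by
    refine Polynomial.eq_of_infinite_eval_eq _ _ ?_
    refine Set.infinite_of_injective_forall_mem (f := fun n : ℕ => (n : ℂ)) Nat.cast_injective ?_
    intro n
    have hH : (A + (n : ℂ) • B).IsHermitian := by
      refine hA.add ?_
      rw [Matrix.IsHermitian, Matrix.conjTranspose_smul, hB.eq]
      simp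
    have h := congrFun (congrFun (comm_herm G hG _ hH) p) q
    simpa [Polynomial.eval_finsetSum, hL, Matrix.mul_apply] using h
  have := congrArg (Polynomial.eval Complex.I) hpoly
  simpa [Polynomial.eval_finsetSum, hL, Matrix.mul_apply] using this

open scoped MatrixOrder Matrix.Norms.L2Operator in
theorem sqrt_exists {κ : Type*} [Fintype κ] [DecidableEq κ] (G : Matrix κ κ ℂ)
    (hG : G.PosSemidef) : ∃ S : Matrix κ κ ℂ, S.IsHermitian ∧ S * S = G ∧
      ∀ A, G * A = A * G → S * A = A * S := by
  have h0 : 0 ≤ G := hG.nonneg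
  refine ⟨CFC.sqrt G, (Matrix.nonneg_iff_posSemidef.1 (CFC.sqrt_nonneg G)).1, CFC.sqrt_mul_sqrt_self G h0, ?_⟩
  intro A hA
  have hc : Commute G A := hA
  rw [CFC.sqrt_eq_cfc]
  exact hc.cfc_nnreal _

/-- Partial trace over the second factor. -/
noncomputable def ptr {κ : Type*} [Fintype κ] (A : Matrix (κ × κ) (κ × κ) ℂ) : Matrix κ κ ℂ :=
  Matrix.of fun a a' => ∑ b, A (a, b) (a', b)

theorem ptr_posSemidef {κ : Type*} [Fintype κ] [DecidableEq κ] (A : Matrix (κ × κ) (κ × κ) ℂ)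
    (hA : A.PosSemidef) : (ptr A).PosSemidef := by
  have : ptr A = ∑ b, A.submatrix (fun a => (a, b)) (fun a => (a, b)) := by
    ext a a'
    simp [ptr, Matrix.sum_apply]
  rw [this]
  exact Matrix.posSemidef_sum _ fun b _ => hA.submatrix _

theorem ptr_trace {κ : Type*} [Fintype κ] [DecidableEq κ] (A : Matrix (κ × κ) (κ × κ) ℂ)
    (B : Matrix κ κ ℂ) : (ptr A * B).trace = (A * (B ⊗ₖ 1)).trace := by
  simp only [Matrix.trace, Matrix.diag, Matrix.mul_apply, ptr, Matrix.of_apply,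
    Fintype.sum_prod_type, Matrix.kroneckerMap_apply, Matrix.one_apply, Finset.sum_mul]
  refine Finset.sum_congr rfl fun a _ => ?_
  rw [Finset.sum_comm]
  simp

theorem kron_trace_wv {d N : ℕ} (M : Matrix (Fin N → Fin d) (Fin N → Fin d) ℂ)
    (X : Matrix (Fin d) (Fin d) ℂ) :
    ((M ⊗ₖ (1 : Matrix (Fin N → Fin d) (Fin N → Fin d) ℂ)) * outer (wv N X)).trace =
      (M * (tpow X N * (tpow X N)ᴴ)).trace := by
  simp only [Matrix.trace, Matrix.diag, Matrix.mul_apply, outer, wv, Matrix.of_apply,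
    Fintype.sum_prod_type, Matrix.kroneckerMap_apply, Matrix.one_apply, Finset.mul_sum,
    Matrix.conjTranspose_apply]
  refine Finset.sum_congr rfl fun a _ => ?_
  rw [Finset.sum_comm]
  simp

theorem acc_eq {d N : ℕ} (T : Matrix (Fin N → Fin d × Fin d) (Fin N → Fin d × Fin d) ℂ)
    (ψ : Fin d × Fin d → ℂ) :
    acc T (outer ψ) = ((T.submatrix (Equiv.arrowProdEquivProdArrow (Fin N) (fun _ => Fin d) (fun _ => Fin d)).symm
      (Equiv.arrowProdEquivProdArrow (Fin N) (fun _ => Fin d) (fun _ => Fin d)).symm *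
        outer (wv N (Matrix.of fun i j => ψ (i, j)))).trace).re := by
  have h : tpow (outer ψ) N = (outer (wv N (Matrix.of fun i j => ψ (i, j)))).submatrix
      (Equiv.arrowProdEquivProdArrow (Fin N) (fun _ => Fin d) (fun _ => Fin d))
      (Equiv.arrowProdEquivProdArrow (Fin N) (fun _ => Fin d) (fun _ => Fin d)) := by
    ext x y
    simp [tpow, outer, wv, Finset.prod_mul_distrib, Equiv.arrowProdEquivProdArrow]
  rw [acc, h]
  congr 1
  simp only [Matrix.trace, Matrix.diag, Matrix.mul_apply, Matrix.submatrix_apply]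
  refine Fintype.sum_equiv (Equiv.arrowProdEquivProdArrow (Fin N) (fun _ => Fin d) (fun _ => Fin d)) _ _ fun x => ?_
  refine Fintype.sum_equiv (Equiv.arrowProdEquivProdArrow (Fin N) (fun _ => Fin d) (fun _ => Fin d)) _ _ fun y => ?_
  simp only [Equiv.symm_apply_apply]

theorem localA_eq {d N : ℕ} (M : Matrix (Fin N → Fin d) (Fin N → Fin d) ℂ) :
    localA M = (M ⊗ₖ (1 : Matrix (Fin N → Fin d) (Fin N → Fin d) ℂ)).submatrix
      (Equiv.arrowProdEquivProdArrow (Fin N) (fun _ => Fin d) (fun _ => Fin d))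
      (Equiv.arrowProdEquivProdArrow (Fin N) (fun _ => Fin d) (fun _ => Fin d)) := by
  ext x y
  simp [localA, Matrix.one_apply, Equiv.arrowProdEquivProdArrow]

theorem trace_aux {κ : Type*} [Fintype κ] (S T L G : Matrix κ κ ℂ) (hSS : S * S = G)
    (h3 : S * L = L * S) (h4 : S * Lᴴ = Lᴴ * S) :
    (S * T * S * (L * Lᴴ)).trace = (Lᴴ * T * L * G).trace := by
  calc (S * T * S * (L * Lᴴ)).trace
      = (S * (T * (S * L) * Lᴴ)).trace := by simp only [Matrix.mul_assoc]
    _ = ((T * (S * L) * Lᴴ) * S).trace := Matrix.trace_mul_comm _ _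
    _ = (T * L * (S * (Lᴴ * S))).trace := by
        rw [h3]; simp only [Matrix.mul_assoc]
    _ = (T * L * G * Lᴴ).trace := by
        rw [← h4, ← hSS]; simp only [Matrix.mul_assoc]
    _ = (Lᴴ * (T * L * G)).trace := Matrix.trace_mul_comm _ _
    _ = _ := by simp only [Matrix.mul_assoc]

set_option maxHeartbeats 1000000 in
theorem exists_local {d N : ℕ}
    (T : Matrix (Fin N → Fin d × Fin d) (Fin N → Fin d × Fin d) ℂ) (hT : IsTester T) :
    ∃ M : Matrix (Fin N → Fin d) (Fin N → Fin d) ℂ, IsTester M ∧ IsTester (localA M) ∧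
      ∀ ψ : Fin d × Fin d → ℂ,
        (∀ c : ℝ, (∀ U ∈ Matrix.unitaryGroup (Fin d) ℂ, c ≤ acc T (outer (applyB U ψ))) →
          c ≤ acc (localA M) (outer ψ)) ∧
        (∀ s : ℝ, (∀ U ∈ Matrix.unitaryGroup (Fin d) ℂ, acc T (outer (applyB U ψ)) ≤ s) →
          acc (localA M) (outer ψ) ≤ s) := by
  obtain ⟨G, hpsd, hptr, hcomm, hle⟩ := haar_exists d N
  obtain ⟨S, hSh, hSS, hSc⟩ := sqrt_exists G hpsd
  let e := Equiv.arrowProdEquivProdArrow (Fin N) (fun _ => Fin d) (fun _ => Fin d)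
  obtain ⟨T', hT'⟩ : ∃ T', T' = T.submatrix e.symm e.symm := ⟨_, rfl⟩
  have h0 : T'.PosSemidef := by rw [hT']; exact hT.1.submatrix _
  have h1 : (1 - T').PosSemidef := by
    have := hT.2.submatrix e.symm
    rw [Matrix.submatrix_sub, Pi.sub_apply, Pi.sub_apply, Matrix.submatrix_one_equiv] at this
    rw [hT']; exact this
  have hM : IsTester (ptr (S * T' * S)) := by
    refine ⟨ptr_posSemidef _ ?_, ?_⟩
    · have := h0.mul_mul_conjTranspose_same S
      rwa [hSh.eq] at this
    · have h2 : 1 - ptr (S * T' * S) = ptr (S * (1 - T') * S) := by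
        rw [Matrix.mul_sub, Matrix.sub_mul, Matrix.mul_one, hSS]
        ext a a'
        simp [ptr, hptr]
      rw [h2]
      have := h1.mul_mul_conjTranspose_same S
      rw [hSh.eq] at this
      exact ptr_posSemidef _ this
  have hacc : ∀ ψ : Fin d × Fin d → ℂ, acc (localA (ptr (S * T' * S))) (outer ψ) =
      (((lft N (Matrix.of fun i j => ψ (i, j)))ᴴ * T' * lft N (Matrix.of fun i j => ψ (i, j)) * G).trace).re := by
    intro ψ
    rw [acc_eq, localA_eq]
    simp only [Matrix.submatrix_submatrix, Equiv.self_comp_symm, Matrix.submatrix_id_id]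
    rw [kron_trace_wv, ptr_trace]
    set X : Matrix (Fin d) (Fin d) ℂ := Matrix.of fun i j => ψ (i, j)
    have h2 : (tpow X N * (tpow X N)ᴴ) ⊗ₖ (1 : Matrix (Fin N → Fin d) (Fin N → Fin d) ℂ) =
        lft N X * (lft N X)ᴴ := by
      rw [← lft_conjTranspose, ← lft_mul, lft, tpow_mul', tpow_conjTranspose']
    have h3 : S * lft N X = lft N X * S := hSc _ (comm_all G hcomm X)
    have h4 : S * (lft N X)ᴴ = (lft N X)ᴴ * S := by
      rw [← lft_conjTranspose]; exact hSc _ (comm_all G hcomm _)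
    rw [h2, trace_aux S T' (lft N X) G hSS h3 h4]
  have haccT : ∀ (ψ : Fin d × Fin d → ℂ) (W : Matrix (Fin d) (Fin d) ℂ),
      acc T (outer (applyB Wᵀ ψ)) =
      (((lft N (Matrix.of fun i j => ψ (i, j)))ᴴ * T' * lft N (Matrix.of fun i j => ψ (i, j)) *
        outer (wv N W)).trace).re := by
    intro ψ W
    rw [acc_eq]
    have h2 : (Matrix.of fun i j => applyB Wᵀ ψ (i, j)) = (Matrix.of fun i j => ψ (i, j)) * W := by
      ext i j
      simp [applyB, Matrix.mul_apply, mul_comm]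
    rw [h2, ← lft_wv, outer_mulVec, ← hT']
    congr 1
    rw [← Matrix.mul_assoc, Matrix.trace_mul_comm]
    simp only [Matrix.mul_assoc]
  have hWt : ∀ W ∈ Matrix.unitaryGroup (Fin d) ℂ, Wᵀ ∈ Matrix.unitaryGroup (Fin d) ℂ := by
    intro W hW
    rw [Matrix.mem_unitaryGroup_iff]
    have := congrArg Matrix.transpose (Matrix.mem_unitaryGroup_iff'.1 hW)
    rw [Matrix.transpose_mul, Matrix.transpose_one] at this
    exact this
  refine ⟨ptr (S * T' * S), hM, ⟨?_, ?_⟩, fun ψ => ⟨fun c hc => ?_, fun s hs => ?_⟩⟩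
  · rw [localA_eq]
    exact (hM.1.kronecker Matrix.PosSemidef.one).submatrix _
  · have h2 : 1 - localA (ptr (S * T' * S)) =
        ((1 - ptr (S * T' * S)) ⊗ₖ (1 : Matrix (Fin N → Fin d) (Fin N → Fin d) ℂ)).submatrix e e := by
      have h5 : ∀ A : Matrix (Fin N → Fin d) (Fin N → Fin d) ℂ,
          (1 - A) ⊗ₖ (1 : Matrix (Fin N → Fin d) (Fin N → Fin d) ℂ) = 1 - A ⊗ₖ 1 := by
        intro A
        rw [← Matrix.one_kronecker_one]
        ext p q
        simp only [Matrix.kroneckerMap_apply, Matrix.sub_apply, sub_mul]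
      rw [localA_eq, h5, Matrix.submatrix_sub,
        Pi.sub_apply, Pi.sub_apply, Matrix.submatrix_one_equiv]
    rw [h2]
    exact (hM.2.kronecker Matrix.PosSemidef.one).submatrix _
  · rw [hacc]
    refine hle _ _ fun W hW => ?_
    rw [← haccT]
    exact hc _ (hWt W hW)
  · rw [hacc]
    have h2 := hle (-((lft N (Matrix.of fun i j => ψ (i, j)))ᴴ * T' *
      lft N (Matrix.of fun i j => ψ (i, j)))) (-s) ?_
    · rw [Matrix.neg_mul, Matrix.trace_neg, Complex.neg_re] at h2
      linarith
    · intro W hW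
      rw [Matrix.neg_mul, Matrix.trace_neg, Complex.neg_re, ← haccT]
      have := hs _ (hWt W hW)
      linarith

/-- Theorem 3.1, optimal local tester:
unitary invariance on `H_B` implies an optimal local tester on `H_A`. -/
theorem stmt_0 (d N : ℕ) (hd : 1 ≤ d) (hN : 1 ≤ N)
    (Pyes Pno : Set (Fin d × Fin d → ℂ))
    (hdisj : Disjoint Pyes Pno)
    (hunit : ∀ ψ ∈ Pyes ∪ Pno, IsUnitVec ψ)
    (hinvyes : ∀ U ∈ Matrix.unitaryGroup (Fin d) ℂ, ∀ ψ ∈ Pyes, applyB U ψ ∈ Pyes)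
    (hinvno : ∀ U ∈ Matrix.unitaryGroup (Fin d) ℂ, ∀ ψ ∈ Pno, applyB U ψ ∈ Pno)
    (c s : ℝ) (hs0 : 0 ≤ s) (hsc : s < c) (hc1 : c ≤ 1)
    (T : Matrix (Fin N → Fin d × Fin d) (Fin N → Fin d × Fin d) ℂ)
    (hT : IsTester T)
    (hyes : ∀ ψ ∈ Pyes, c ≤ acc T (outer ψ))
    (hno : ∀ ψ ∈ Pno, acc T (outer ψ) ≤ s) :
    ∃ M : Matrix (Fin N → Fin d) (Fin N → Fin d) ℂ,
      IsTester M ∧ IsTester (localA M) ∧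
      (∀ ψ ∈ Pyes, c ≤ acc (localA M) (outer ψ)) ∧
      (∀ ψ ∈ Pno, acc (localA M) (outer ψ) ≤ s) := by
  obtain ⟨M, hM, hL, h⟩ := exists_local T hT
  exact ⟨M, hM, hL, fun ψ hψ => (h ψ).1 c fun U hU => hyes _ (hinvyes U hU ψ hψ),
    fun ψ hψ => (h ψ).2 s fun U hU => hno _ (hinvno U hU ψ hψ)⟩

end PaperStmt
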